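/- Theorem (GetProb via weighted model counting). Let ψ be an n-qubit state in bit-slice normal form with scalar k ∈ ℕ and integer coefficient functions a, b, c, d : (Fin n → Bool) → ℤ, let q : Fin n be a qubit and b0 : Bool an outcome. Then the unnormalized probability of outcome b0 on qubit q equals the weighted count over all assignments consistent with that outcome: ∑ over v : Fin n → Bool with v q = b0 of Complex.normSq (ψ v) = (2 : ℝ)^(-(k:ℤ)) * ∑ over v with v q = b0 of ((a v)^2 + (b v)^2 + (c v)^2 + (d v)^2 + Real.sqrt 2 * ((d v) * ((c v) − (a v)) + (b v) * ((a v) + (c v)))), where the integer coefficients are cast to ℝ. -/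

import Mathlib

/-!
Since `ω = s + s i` with `s = √2 / 2`, one has `ω ^ 2 = i` and `ω ^ 3 = -s + s i`. Hence
`a ω ^ 3 + b ω ^ 2 + c ω + d` has real part `d + s (c - a)` and imaginary part `b + s (a + c)`,
and the sum of their squares is the weight in the theorem because `s ^ 2 = 1 / 2`: the cross
terms `± 2 s ^ 2 a c` cancel. The scalar `√2 ^ (-k)` contributes `2 ^ (-k)` to the squared
modulus, so the identity holds for every single amplitude and is then summed.
-/

noncomputable def ω : ℂ := Complex.exp (Real.pi * Complex.I / 4)

theorem omega_eq : ω = ((Real.sqrt 2 / 2 : ℝ) : ℂ) + ((Real.sqrt 2 / 2 : ℝ) : ℂ) * Complex.I := by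
  have h : (Real.pi * Complex.I / 4 : ℂ) = ((Real.pi / 4 : ℝ) : ℂ) * Complex.I := by
    push_cast
    ring
  rw [ω, h, Complex.exp_mul_I, ← Complex.ofReal_cos, ← Complex.ofReal_sin,
    Real.cos_pi_div_four, Real.sin_pi_div_four]

theorem omega_sq : ω ^ 2 = Complex.I := by
  have h : (Real.pi * Complex.I / 4 : ℂ) * 2 = Real.pi / 2 * Complex.I := by ring
  rw [ω, sq, ← Complex.exp_add, ← mul_two, h, Complex.exp_pi_div_two_mul_I]

/-- Squared modulus of an element of `ℤ[ω]`, allowing real coefficients. -/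
theorem normSq_omega_poly (a b c d : ℝ) :
    Complex.normSq ((a : ℂ) * ω ^ 3 + (b : ℂ) * ω ^ 2 + (c : ℂ) * ω + (d : ℂ)) =
      a ^ 2 + b ^ 2 + c ^ 2 + d ^ 2 + Real.sqrt 2 * (d * (c - a) + b * (a + c)) := by
  have hs : Real.sqrt 2 ^ 2 = 2 := Real.sq_sqrt (by norm_num)
  have hz : (a : ℂ) * ω ^ 3 + (b : ℂ) * ω ^ 2 + (c : ℂ) * ω + (d : ℂ) =
      ((d + Real.sqrt 2 / 2 * (c - a) : ℝ) : ℂ) +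
        ((b + Real.sqrt 2 / 2 * (a + c) : ℝ) : ℂ) * Complex.I := by
    rw [pow_succ ω 2, omega_sq, omega_eq]
    push_cast
    linear_combination (a : ℂ) * (Real.sqrt 2 / 2) * Complex.I_sq
  rw [hz, Complex.normSq_add_mul_I]
  linear_combination (a ^ 2 + c ^ 2) / 2 * hs

theorem normSq_sqrt_two_zpow (k : ℕ) :
    Complex.normSq ((Real.sqrt 2 : ℂ) ^ (-(k : ℤ))) = (2 : ℝ) ^ (-(k : ℤ)) := by
  rw [map_zpow₀, Complex.normSq_ofReal, Real.mul_self_sqrt (by norm_num)]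

/-- GetProb via weighted model counting: the unnormalized probability of outcome
`b0` on qubit `q` of a bit-slice normal-form state equals `2^(-k)` times the sum
over consistent assignments of the per-assignment weight. -/
theorem getProb_weighted_model_counting
    (n : ℕ) (k : ℕ) (a b c d : (Fin n → Bool) → ℤ)
    (ψ : (Fin n → Bool) → ℂ)
    (hψ : ∀ v, ψ v = (Real.sqrt 2 : ℂ) ^ (-(k : ℤ)) *
      ((a v : ℂ) * ω ^ 3 + (b v : ℂ) * ω ^ 2 + (c v : ℂ) * ω + (d v : ℂ)))
    (q : Fin n) (b0 : Bool) :
    ∑ v ∈ Finset.univ.filter (fun v : Fin n → Bool => v q = b0),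
        Complex.normSq (ψ v) =
      (2 : ℝ) ^ (-(k : ℤ)) *
        ∑ v ∈ Finset.univ.filter (fun v : Fin n → Bool => v q = b0),
          ((a v : ℝ) ^ 2 + (b v : ℝ) ^ 2 + (c v : ℝ) ^ 2 + (d v : ℝ) ^ 2 +
            Real.sqrt 2 *
              ((d v : ℝ) * ((c v : ℝ) - (a v : ℝ)) +
               (b v : ℝ) * ((a v : ℝ) + (c v : ℝ)))) := by
  rw [Finset.mul_sum]
  refine Finset.sum_congr rfl fun v _ => ?_
  rw [hψ v, Complex.normSq_mul, normSq_sqrt_two_zpow, ← normSq_omega_poly]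
  push_cast
  rfl
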